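/- Let b > 0 and define k(x) = exp(−|x|^(−b)) for real x ≠ 0. Then there exists δ ∈ (0,1) such that for every real x with 0 < |x| < δ, one has (k'(x))² ≤ 2·k(x)·k''(x). -/

import Mathlib

/-- The function `k(x) = exp(-|x|^(-b))`, defined (with junk value elsewhere) on `ℝ`. -/
noncomputable def expWeight (b : ℝ) (x : ℝ) : ℝ := Real.exp (-|x| ^ (-b))

theorem expWeight_hasDerivAt (b x : ℝ) (hx : 0 < x) :
    HasDerivAt (expWeight b) (Real.exp (-x ^ (-b)) * (b * x ^ (-b - 1))) x := by
  have h1 : HasDerivAt (fun y : ℝ => Real.exp (-y ^ (-b)))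
      (Real.exp (-x ^ (-b)) * (b * x ^ (-b - 1))) x := by
    have h := ((Real.hasDerivAt_rpow_const (x := x) (p := -b) (Or.inl hx.ne')).fun_neg).exp
    convert h using 1
    ring
  refine h1.congr_of_eventuallyEq ?_
  filter_upwards [lt_mem_nhds hx] with y hy
  simp [expWeight, abs_of_pos hy]

theorem expWeight_hasDerivAt2 (b x : ℝ) (hx : 0 < x) :
    HasDerivAt (deriv (expWeight b)) (Real.exp (-x ^ (-b)) * (b * x ^ (-b - 1)) * (b * x ^ (-b - 1))
      + Real.exp (-x ^ (-b)) * (b * ((-b - 1) * x ^ (-b - 1 - 1)))) x := by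
  have h1 : HasDerivAt (fun y : ℝ => Real.exp (-y ^ (-b)))
      (Real.exp (-x ^ (-b)) * (b * x ^ (-b - 1))) x := by
    have h := ((Real.hasDerivAt_rpow_const (x := x) (p := -b) (Or.inl hx.ne')).fun_neg).exp
    convert h using 1
    ring
  have h2 := (Real.hasDerivAt_rpow_const (x := x) (p := -b - 1) (Or.inl hx.ne')).const_mul b
  refine (h1.fun_mul h2).congr_of_eventuallyEq ?_
  filter_upwards [lt_mem_nhds hx] with y hy
  exact (expWeight_hasDerivAt b y hy).deriv

theorem expWeight_pos_case (b x : ℝ) (hb : 0 < b) (hx : 0 < x)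
    (h : x ^ b ≤ b / (2 * (b + 1))) :
    (deriv (expWeight b) x) ^ 2 ≤ 2 * expWeight b x * deriv (deriv (expWeight b)) x := by
  rw [(expWeight_hasDerivAt b x hx).deriv, (expWeight_hasDerivAt2 b x hx).deriv]
  have e0 : expWeight b x = Real.exp (-x ^ (-b)) := by simp [expWeight, abs_of_pos hx]
  rw [e0]
  have e1 : x ^ (-b - 1 - 1) = x ^ b * (x ^ (-b - 1)) ^ 2 := by
    rw [sq, ← Real.rpow_add hx, ← Real.rpow_add hx]
    congr 1
    ring
  rw [e1]
  generalize Real.exp (-x ^ (-b)) = E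
  generalize x ^ (-b - 1) = p
  rw [le_div_iff₀ (by positivity)] at h
  have key : 0 ≤ (E * p) ^ 2 * b * (b - x ^ b * (2 * (b + 1))) :=
    mul_nonneg (by positivity) (by linarith)
  nlinarith [key]

theorem expWeight_even (b x : ℝ) : expWeight b (-x) = expWeight b x := by
  simp [expWeight]

theorem expWeight_deriv_odd (b x : ℝ) :
    deriv (expWeight b) (-x) = -deriv (expWeight b) x := by
  have h := deriv_comp_neg (expWeight b) x
  simp only [expWeight_even] at h
  have : deriv (fun y => expWeight b y) x = deriv (expWeight b) x := rfl
  linarith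

theorem expWeight_deriv2_even (b x : ℝ) :
    deriv (deriv (expWeight b)) (-x) = deriv (deriv (expWeight b)) x := by
  have h := deriv_comp_neg (deriv (expWeight b)) x
  simp only [expWeight_deriv_odd, deriv.fun_neg] at h
  linarith

/-- For `b > 0`, near `0` (and away from `0`) one has the self-bounded-gradient inequality
`(k'(x))² ≤ 2 k(x) k''(x)`. -/
theorem expWeight_self_bounded_gradient (b : ℝ) (hb : 0 < b) :
    ∃ δ : ℝ, 0 < δ ∧ δ < 1 ∧ ∀ x : ℝ, x ≠ 0 → |x| < δ →
      (deriv (expWeight b) x) ^ 2 ≤ 2 * expWeight b x * deriv (deriv (expWeight b)) x := by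
  have hc : 0 < b / (2 * (b + 1)) := by positivity
  refine ⟨min (1 / 2) ((b / (2 * (b + 1))) ^ b⁻¹), by positivity,
    (min_le_left _ _).trans_lt (by norm_num), ?_⟩
  intro x hx0 hx
  have hle : |x| ^ b ≤ b / (2 * (b + 1)) := by
    have h := Real.rpow_le_rpow (abs_nonneg x) (hx.le.trans (min_le_right _ _)) hb.le
    rwa [Real.rpow_inv_rpow hc.le hb.ne'] at h
  have h := expWeight_pos_case b |x| hb (abs_pos.mpr hx0) hle
  rcases abs_choice x with e | e
  · rwa [e] at h
  · rw [e] at h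
    rwa [expWeight_deriv_odd, expWeight_deriv2_even, expWeight_even, neg_sq] at h
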